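/- Let k ≥ 1 be an integer and let G be a k-stepwise irregular graph on n vertices with at least one edge, maximum degree Δ = Δ(G) and m edges. If G is not isomorphic to the complete bipartite graph K_{Δ, Δ−k} and gcd(Δ, k) = 1, then m ≤ (Δ − k)(n − Δ + k − 1). -/

import Mathlib

/-!
Adjacent vertices have degrees differing by `k`, so the parity of `⌊(Δ - deg v) / k⌋` is a proper
2-colouring. With `S` the odd class and `T` the even one, every vertex of `S` has degree at most
`d = Δ - k`, so counting edges from either side gives `m ≤ d|S|` and `m ≤ Δ|T|`. A vertex `x` of
degree `Δ` lies in `T` and its neighbours have degree `d`, whence `|S| ≥ Δ` and `|T| ≥ d`.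
If `|T| > d`, then `m ≤ d|S| ≤ d(n - d - 1)`; if `|T| = d` and `|S| > Δ`, then
`m ≤ dΔ ≤ d(|S| - 1) = d(n - d - 1)`. Finally, if `|S| = Δ` and `|T| = d`, then `x` is joined to
all of `S`, so every vertex of `S` has degree `d` and is joined to all of `T`.
-/

open SimpleGraph Finset

/-- A graph `G` is `k`-stepwise irregular if the degrees of every pair of adjacent
vertices differ by exactly `k`. -/
def IsSI {V : Type*} [Fintype V] (G : SimpleGraph V) [DecidableRel G.Adj] (k : ℕ) : Prop :=
  ∀ ⦃u v : V⦄, G.Adj u v → |(G.degree u : ℤ) - (G.degree v : ℤ)| = (k : ℤ)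

section Bipartite

variable {V : Type*} {G : SimpleGraph V}

theorem nonempty_iso_completeBipartiteGraph_of_isCompleteBetween {s t : Set V}
    (h : G.IsBipartiteWith s t) (hst : s ∪ t = Set.univ) (hcomplete : G.IsCompleteBetween s t) :
    Nonempty (G ≃g completeBipartiteGraph s t) := by
  classical
  let e : s ⊕ t ≃ V :=
    (Equiv.Set.union h.disjoint).symm.trans ((Equiv.setCongr hst).trans (Equiv.Set.univ V))
  have he_inl (v : s) : e (.inl v) = v := rfl
  have he_inr (w : t) : e (.inr w) = w := rfl
  have not_adj_left (u v : s) : ¬ G.Adj u v := fun huv ↦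
    h.disjoint.notMem_of_mem_left v.2 (h.mem_of_mem_adj u.2 huv)
  have not_adj_right (u v : t) : ¬ G.Adj u v := fun huv ↦
    h.disjoint.notMem_of_mem_left (h.mem_of_mem_adj' v.2 huv) u.2
  have adj (v : s) (w : t) : G.Adj v w := hcomplete v.2 w.2
  refine ⟨RelIso.symm ⟨e, ?_⟩⟩
  rintro (u | u) (v | v) <;>
    simp [he_inl, he_inr, not_adj_left, not_adj_right, adj, (adj _ _).symm]

variable {s t : Finset V}

theorem isBipartiteWith_adj_of_degree_eq_card (h : G.IsBipartiteWith s t) {v w : V}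
    [Fintype (G.neighborSet v)] (hv : v ∈ s) (hw : w ∈ t) (hdeg : G.degree v = #t) : G.Adj v w := by
  have hN : G.neighborFinset v = t :=
    eq_of_subset_of_card_le (isBipartiteWith_neighborFinset_subset h hv) hdeg.ge
  rwa [← mem_neighborFinset, hN]

variable [Fintype V] [DecidableRel G.Adj]

theorem isBipartiteWith_card_edgeFinset_le_card_mul (h : G.IsBipartiteWith s t) {a : ℕ}
    (hs : ∀ v ∈ s, G.degree v ≤ a) : #G.edgeFinset ≤ #s * a := by
  rw [← isBipartiteWith_sum_degrees_eq_card_edges h]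
  exact sum_le_card_nsmul s _ a hs

theorem isBipartiteWith_card_edgeFinset_le_of_card_ne (h : G.IsBipartiteWith s t) {a b : ℕ}
    (hs : ∀ v ∈ s, G.degree v ≤ a) (ht : ∀ w ∈ t, G.degree w ≤ b)
    (hbs : b ≤ #s) (hat : a ≤ #t) (hne : ¬ (#s = b ∧ #t = a)) :
    (#G.edgeFinset : ℤ) ≤ a * (#s + #t - a - 1) := by
  rcases hat.lt_or_eq with hat | hat
  · calc (#G.edgeFinset : ℤ) ≤ a * #s := by
          rw [mul_comm]; exact_mod_cast isBipartiteWith_card_edgeFinset_le_card_mul h hs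
      _ ≤ a * (#s + #t - a - 1) := by gcongr; lia
  · calc (#G.edgeFinset : ℤ) ≤ a * b := by
          rw [hat]; exact_mod_cast isBipartiteWith_card_edgeFinset_le_card_mul h.symm ht
      _ ≤ a * (#s + #t - a - 1) := by gcongr; lia

end Bipartite

namespace IsSI

variable {V : Type*} [Fintype V] {G : SimpleGraph V} [DecidableRel G.Adj] {k : ℕ}

theorem degree_eq_add_or (hSI : IsSI G k) {u v : V} (huv : G.Adj u v) :
    G.degree u = G.degree v + k ∨ G.degree v = G.degree u + k := by
  rcases (abs_eq (Int.natCast_nonneg k)).1 (hSI huv) with h | h <;> lia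

theorem degree_add_eq_maxDegree (hSI : IsSI G k) {x v : V} (hx : G.degree x = G.maxDegree)
    (hxv : G.Adj x v) : G.degree v + k = G.maxDegree := by
  have := G.degree_le_maxDegree v
  have := hSI.degree_eq_add_or hxv
  lia

theorem exists_isBipartiteWith_compl [DecidableEq V] (hSI : IsSI G k) (hk : 0 < k) :
    ∃ s : Finset V, G.IsBipartiteWith s ↑sᶜ ∧ ∀ v ∈ s, G.degree v + k ≤ G.maxDegree := by
  let level (v : V) : ℕ := (G.maxDegree - G.degree v) / k
  have level_eq_succ {u v : V} (huv : G.degree u = G.degree v + k) : level v = level u + 1 := by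
    have hsub : G.maxDegree - G.degree v = G.maxDegree - G.degree u + k := by
      have := G.degree_le_maxDegree u
      lia
    simp only [level, hsub, Nat.add_div_right _ hk]
  refine ⟨({v | Odd (level v)} : Finset V),
    ⟨disjoint_coe.2 disjoint_compl_right, fun u v huv ↦ ?_⟩, ?_⟩
  · have hparity : Odd (level u) ↔ ¬ Odd (level v) := by
      rcases hSI.degree_eq_add_or huv with h | h <;>
        simp only [level_eq_succ h, Nat.odd_add_one, not_not]
    simp only [mem_coe, mem_compl, mem_filter_univ]
    tauto
  · intro v hv
    have hlevel : 0 < level v := (mem_filter_univ v |>.1 hv).pos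
    have := Nat.div_pos_iff.1 hlevel
    lia

theorem nonempty_iso_completeBipartiteGraph [DecidableEq V] (hSI : IsSI G k) {s : Finset V}
    (h : G.IsBipartiteWith s ↑sᶜ) {x : V} (hxs : x ∉ s) (hx : G.degree x = G.maxDegree)
    (hs : #s = G.maxDegree) (hsc : #sᶜ = G.maxDegree - k) :
    Nonempty (G ≃g completeBipartiteGraph (Fin G.maxDegree) (Fin (G.maxDegree - k))) := by
  have hdeg (v : V) (hv : v ∈ s) : G.degree v = #sᶜ := by
    have hxv : G.Adj x v :=
      isBipartiteWith_adj_of_degree_eq_card h.symm (mem_compl.2 hxs) hv (hx.trans hs.symm)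
    have := hSI.degree_add_eq_maxDegree hx hxv
    lia
  have hcomplete : G.IsCompleteBetween s ↑sᶜ := fun v hv w hw ↦
    isBipartiteWith_adj_of_degree_eq_card h hv hw (hdeg v hv)
  obtain ⟨e⟩ := nonempty_iso_completeBipartiteGraph_of_isCompleteBetween h (by simp) hcomplete
  exact ⟨e.trans (completeBipartiteGraphCongr (s.equivFinOfCardEq hs) (sᶜ.equivFinOfCardEq hsc))⟩

end IsSI

theorem ksi_size_le_of_not_completeBipartite_general {V : Type*} [Fintype V]
    (G : SimpleGraph V) [DecidableRel G.Adj]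
    (k : ℕ) (hk : 1 ≤ k) (hSI : IsSI G k) (he : ∃ u v, G.Adj u v)
    (hne : ¬ Nonempty (G ≃g completeBipartiteGraph (Fin G.maxDegree)
      (Fin (G.maxDegree - k)))) :
    (G.edgeFinset.card : ℤ) ≤
      ((G.maxDegree : ℤ) - k) * ((Fintype.card V : ℤ) - G.maxDegree + k - 1) := by
  classical
  obtain ⟨u, v, huv⟩ := he
  have : Nonempty V := ⟨u⟩
  obtain ⟨x, hx⟩ := G.exists_maximal_degree_vertex
  have hpos : 0 < G.degree x :=
    ((G.degree_pos_iff_exists_adj u).2 ⟨v, huv⟩).trans_le (hx ▸ G.degree_le_maxDegree u)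
  obtain ⟨y, hxy⟩ := (G.degree_pos_iff_exists_adj x).1 hpos
  have hy := hSI.degree_add_eq_maxDegree hx.symm hxy
  obtain ⟨s, hbip, hs⟩ := hSI.exists_isBipartiteWith_compl hk
  have hxs : x ∉ s := fun hxs ↦ by have := hs x hxs; lia
  have hys : y ∈ s := hbip.symm.mem_of_mem_adj (mem_coe.2 (mem_compl.2 hxs)) hxy
  have hΔs : G.maxDegree ≤ #s := hx ▸ isBipartiteWith_degree_le' hbip (mem_compl.2 hxs)
  have hysc : G.degree y ≤ #sᶜ := isBipartiteWith_degree_le hbip hys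
  have hcard := card_add_card_compl s
  have hne' : ¬ (#s = G.maxDegree ∧ #sᶜ = G.degree y) := fun ⟨hsΔ, _⟩ ↦
    hne (hSI.nonempty_iso_completeBipartiteGraph hbip hxs hx.symm hsΔ (by lia))
  have hd : (G.maxDegree : ℤ) - k = G.degree y := by lia
  have hn : (Fintype.card V : ℤ) - G.maxDegree + k - 1 = #s + #sᶜ - G.degree y - 1 := by lia
  rw [hd, hn]
  exact isBipartiteWith_card_edgeFinset_le_of_card_ne hbip (fun v hv ↦ by have := hs v hv; lia)
    (fun w _ ↦ G.degree_le_maxDegree w) hΔs hysc hne'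

/-- If a `k`-stepwise irregular graph with an edge is not `K_{Δ, Δ−k}` and
`gcd(Δ, k) = 1`, then `m ≤ (Δ − k)(n − Δ + k − 1)`. -/
theorem ksi_size_le_of_not_completeBipartite {V : Type*} [Fintype V] [DecidableEq V]
    (G : SimpleGraph V) [DecidableRel G.Adj]
    (k : ℕ) (hk : 1 ≤ k) (hSI : IsSI G k) (he : ∃ u v, G.Adj u v)
    (hne : ¬ Nonempty (G ≃g completeBipartiteGraph (Fin G.maxDegree)
      (Fin (G.maxDegree - k))))
    (hgcd : Nat.gcd G.maxDegree k = 1) :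
    (G.edgeFinset.card : ℤ) ≤
      ((G.maxDegree : ℤ) - k) * ((Fintype.card V : ℤ) - G.maxDegree + k - 1) :=
  ksi_size_le_of_not_completeBipartite_general G k hk hSI he hne
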